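/- Let U ⊆ (0,1) be an open interval and let u₀, u₁ : U → ℂ be twice differentiable solutions of z(1−z)·u'' + (1 − (3/2)z)·u' − (3/64)·u = 0 on U, with u₀ nowhere vanishing. Let s = u₁/u₀. Then the function z ↦ u₀(z)⁴ · s'(z)² · z²(1−z) is constant on U. (Equivalently, (∂z/∂s)² = c·π₀²·z²(1−z) with π₀ = u₀², which is the statement that the K3 Yukawa coupling C_ss in the normalized-period coordinate s is constant, matching the triviality of the genus zero Gromov–Witten invariants of K3 surfaces.) -/

import Mathlib

/-!
By Abel's identity, the Wronskian `W = u₀ u₁' - u₀' u₁` of two solutions of `p u'' + q u' = r u`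
satisfies `p W' = -q W`. Hence `(h p W²)' = ((h p)' - 2 h q) W²`, which vanishes as soon as
`(h p)' = 2 h q`. For `p = z (1 - z)` and `q = 1 - (3/2) z` this holds with `h = z`. Since
`s' = (u₁ / u₀)' = W / u₀²`, the quantity `u₀⁴ s'² z² (1 - z)` is exactly `h p W²`.
-/

section Wronskian

variable {𝕜 F : Type*} [NontriviallyNormedField 𝕜]

/-- The Wronskian `u v' - u' v` of two functions of one variable. -/
noncomputable def wronskian [NormedCommRing F] [NormedAlgebra 𝕜 F] (u v : 𝕜 → F) (z : 𝕜) : F :=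
  u z * deriv v z - deriv u z * v z

theorem hasDerivAt_wronskian [NormedCommRing F] [NormedAlgebra 𝕜 F] {u v : 𝕜 → F} {z : 𝕜}
    (hu : DifferentiableAt 𝕜 u z) (hu' : DifferentiableAt 𝕜 (deriv u) z)
    (hv : DifferentiableAt 𝕜 v z) (hv' : DifferentiableAt 𝕜 (deriv v) z) :
    HasDerivAt (wronskian u v) (u z * deriv (deriv v) z - deriv (deriv u) z * v z) z :=
  ((hu.hasDerivAt.mul hv'.hasDerivAt).sub (hu'.hasDerivAt.mul hv.hasDerivAt)).congr_deriv
    (by ring)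

theorem deriv_div_eq_wronskian_div_sq [NontriviallyNormedField F] [NormedAlgebra 𝕜 F]
    {u v : 𝕜 → F} {z : 𝕜} (hu : DifferentiableAt 𝕜 u z) (hv : DifferentiableAt 𝕜 v z)
    (hz : u z ≠ 0) :
    deriv (fun x => v x / u x) z = wronskian u v z / u z ^ 2 := by
  rw [deriv_fun_div hv hu hz, wronskian]
  ring

theorem pow_four_mul_deriv_div_sq [NontriviallyNormedField F] [NormedAlgebra 𝕜 F]
    {u v : 𝕜 → F} {z : 𝕜} (hu : DifferentiableAt 𝕜 u z) (hv : DifferentiableAt 𝕜 v z)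
    (hz : u z ≠ 0) :
    u z ^ 4 * deriv (fun x => v x / u x) z ^ 2 = wronskian u v z ^ 2 := by
  rw [deriv_div_eq_wronskian_div_sq hu hv hz]
  field_simp

end Wronskian

/-- `u` is a twice differentiable solution of the linear equation `p u'' + q u' = r u` on `U`.
The leading coefficient `p` may vanish, so `U` may contain singular points of the equation. -/
structure IsSecondOrderSolutionOn {𝕜 F : Type*} [NontriviallyNormedField 𝕜] [NormedCommRing F]
    [NormedAlgebra 𝕜 F] (p q r u : 𝕜 → F) (U : Set 𝕜) : Prop where
  differentiableAt : ∀ z ∈ U, DifferentiableAt 𝕜 u z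
  differentiableAt_deriv : ∀ z ∈ U, DifferentiableAt 𝕜 (deriv u) z
  eq : ∀ z ∈ U, p z * deriv (deriv u) z + q z * deriv u z = r z * u z

namespace IsSecondOrderSolutionOn

section Abel

variable {𝕜 F : Type*} [NontriviallyNormedField 𝕜] [NormedCommRing F] [NormedAlgebra 𝕜 F]
  {p q r h u v : 𝕜 → F} {U : Set 𝕜} {z : 𝕜}

theorem differentiableAt_wronskian (hu : IsSecondOrderSolutionOn p q r u U)
    (hv : IsSecondOrderSolutionOn p q r v U) (hz : z ∈ U) :
    DifferentiableAt 𝕜 (wronskian u v) z :=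
  (hasDerivAt_wronskian (hu.differentiableAt z hz) (hu.differentiableAt_deriv z hz)
    (hv.differentiableAt z hz) (hv.differentiableAt_deriv z hz)).differentiableAt

theorem mul_deriv_wronskian (hu : IsSecondOrderSolutionOn p q r u U)
    (hv : IsSecondOrderSolutionOn p q r v U) (hz : z ∈ U) :
    p z * deriv (wronskian u v) z = -(q z * wronskian u v z) := by
  rw [(hasDerivAt_wronskian (hu.differentiableAt z hz) (hu.differentiableAt_deriv z hz)
    (hv.differentiableAt z hz) (hv.differentiableAt_deriv z hz)).deriv, wronskian]
  linear_combination u z * hv.eq z hz - v z * hu.eq z hz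

theorem hasDerivAt_wronskian_sq_mul (hu : IsSecondOrderSolutionOn p q r u U)
    (hv : IsSecondOrderSolutionOn p q r v U) (hz : z ∈ U)
    (hh : HasDerivAt (fun x => h x * p x) (2 * h z * q z) z) :
    HasDerivAt (fun x => wronskian u v x ^ 2 * (h x * p x)) 0 z := by
  have hW := (hu.differentiableAt_wronskian hv hz).hasDerivAt
  refine ((hW.fun_pow 2).fun_mul hh).congr_deriv ?_
  push_cast
  linear_combination 2 * h z * wronskian u v z * hu.mul_deriv_wronskian hv hz

end Abel

theorem exists_wronskian_sq_mul_eq_const {𝕜 F : Type*} [RCLike 𝕜] [NormedCommRing F]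
    [NormedAlgebra 𝕜 F] {p q r h u v : 𝕜 → F} {U : Set 𝕜} (hUo : IsOpen U)
    (hUc : IsPreconnected U) (hu : IsSecondOrderSolutionOn p q r u U)
    (hv : IsSecondOrderSolutionOn p q r v U)
    (hh : ∀ z ∈ U, HasDerivAt (fun x => h x * p x) (2 * h z * q z) z) :
    ∃ C : F, ∀ z ∈ U, wronskian u v z ^ 2 * (h z * p z) = C := by
  have hW := fun z hz => hu.hasDerivAt_wronskian_sq_mul hv hz (hh z hz)
  exact hUo.exists_is_const_of_deriv_eq_zero hUc
    (fun z hz => (hW z hz).differentiableAt.differentiableWithinAt)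
    (fun z hz => (hW z hz).deriv)

end IsSecondOrderSolutionOn

theorem hasDerivAt_algebraMap_mul_mul_one_sub {𝕜 F : Type*} [NontriviallyNormedField 𝕜]
    [NormedField F] [NormedAlgebra 𝕜 F] [NeZero (2 : F)] (z : 𝕜) :
    HasDerivAt (fun x : 𝕜 => algebraMap 𝕜 F x * (algebraMap 𝕜 F x * (1 - algebraMap 𝕜 F x)))
      (2 * algebraMap 𝕜 F z * (1 - (3 / 2 : F) * algebraMap 𝕜 F z)) z := by
  have hid : HasDerivAt (algebraMap 𝕜 F) 1 z :=
    (algebraMapCLM 𝕜 F).hasDerivAt.congr_deriv (map_one (algebraMap 𝕜 F))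
  refine (hid.fun_mul (hid.fun_mul (hid.const_sub 1))).congr_deriv ?_
  field_simp
  ring

/-- When `r = a b` is constant, the equation is the hypergeometric one with `c = 1` and
`a + b = 1/2`; the Dwork pencil is the case `a = 1/8`, `b = 3/8`. -/
theorem K3_yukawa_constant_general {𝕜 F : Type*} [RCLike 𝕜] [NontriviallyNormedField F]
    [NormedAlgebra 𝕜 F] {U : Set 𝕜} (hUo : IsOpen U) (hUc : IsPreconnected U) {r u₀ u₁ : 𝕜 → F}
    (hu₀ : IsSecondOrderSolutionOn (fun z => algebraMap 𝕜 F z * (1 - algebraMap 𝕜 F z))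
      (fun z => 1 - (3 / 2 : F) * algebraMap 𝕜 F z) r u₀ U)
    (hu₁ : IsSecondOrderSolutionOn (fun z => algebraMap 𝕜 F z * (1 - algebraMap 𝕜 F z))
      (fun z => 1 - (3 / 2 : F) * algebraMap 𝕜 F z) r u₁ U)
    (hu₀ne : ∀ z ∈ U, u₀ z ≠ 0) :
    ∃ C : F, ∀ z ∈ U, u₀ z ^ 4 * deriv (fun x => u₁ x / u₀ x) z ^ 2
      * (algebraMap 𝕜 F z ^ 2 * (1 - algebraMap 𝕜 F z)) = C := by
  have : CharZero F := charZero_of_injective_algebraMap (algebraMap 𝕜 F).injective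
  obtain ⟨C, hC⟩ := hu₀.exists_wronskian_sq_mul_eq_const hUo hUc hu₁
    (h := algebraMap 𝕜 F) fun z _ => hasDerivAt_algebraMap_mul_mul_one_sub z
  refine ⟨C, fun z hz => ?_⟩
  rw [← hC z hz, pow_four_mul_deriv_div_sq (hu₀.differentiableAt z hz)
    (hu₁.differentiableAt z hz) (hu₀ne z hz)]
  ring

/-- If `u₀, u₁` solve `z(1−z)u'' + (1−(3/2)z)u' − (3/64)u = 0` on an open interval
`U ⊆ (0,1)` with `u₀` nowhere vanishing, and `s = u₁/u₀`, then `u₀⁴·(s')²·z²(1−z)` is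
constant on `U`. (Equivalently `(∂z/∂s)² = c·π₀²·z²(1−z)` with `π₀ = u₀²`: the K3
Yukawa coupling `C_ss` in the normalized-period coordinate is constant.) -/
theorem K3_yukawa_constant (c d : ℝ)
    (hU : Set.Ioo c d ⊆ Set.Ioo (0 : ℝ) 1)
    (u₀ u₁ : ℝ → ℂ)
    (hu₀1 : ∀ z ∈ Set.Ioo c d, DifferentiableAt ℝ u₀ z)
    (hu₀2 : ∀ z ∈ Set.Ioo c d, DifferentiableAt ℝ (deriv u₀) z)
    (hu₁1 : ∀ z ∈ Set.Ioo c d, DifferentiableAt ℝ u₁ z)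
    (hu₁2 : ∀ z ∈ Set.Ioo c d, DifferentiableAt ℝ (deriv u₁) z)
    (hode₀ : ∀ z ∈ Set.Ioo c d,
      (z : ℂ) * (1 - (z : ℂ)) * deriv (deriv u₀) z
        + (1 - (3/2 : ℂ) * (z : ℂ)) * deriv u₀ z - (3/64 : ℂ) * u₀ z = 0)
    (hode₁ : ∀ z ∈ Set.Ioo c d,
      (z : ℂ) * (1 - (z : ℂ)) * deriv (deriv u₁) z
        + (1 - (3/2 : ℂ) * (z : ℂ)) * deriv u₁ z - (3/64 : ℂ) * u₁ z = 0)
    (hu₀ne : ∀ z ∈ Set.Ioo c d, u₀ z ≠ 0) :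
    ∃ C : ℂ, ∀ z ∈ Set.Ioo c d,
      (u₀ z) ^ 4 * (deriv (fun x : ℝ => u₁ x / u₀ x) z) ^ 2
        * ((z : ℂ) ^ 2 * (1 - (z : ℂ))) = C :=
  K3_yukawa_constant_general isOpen_Ioo isPreconnected_Ioo (r := fun _ => 3 / 64)
    ⟨hu₀1, hu₀2, fun z hz => sub_eq_zero.mp (hode₀ z hz)⟩
    ⟨hu₁1, hu₁2, fun z hz => sub_eq_zero.mp (hode₁ z hz)⟩ hu₀ne
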